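/- For every integer n ≥ 7, the multiset {n−3, 3^(n−3), 2^2} (one entry n−3, n−3 entries equal to 3, two entries equal to 2) is outerplane-unigraphic: there exists an outerplane graph on n vertices with this degree multiset, and any two outerplane graphs on n vertices with this degree multiset are isomorphic. (Type A2 of the paper's Theorem 1, corresponding to the polytope degree sequence p−1, p−3, 4^(p−4), 3^2 with p = n+1 ≥ 8.) -/

import Mathlib

/-- The vertices strictly between `a` and `b`, traversing the cycle `ZMod n`
from `a` towards `b` in the direction of increasing residues. -/
def Between (n : ℕ) (a b v : ZMod n) : Prop :=
  0 < (v - a).val ∧ (v - a).val < (b - a).val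

/-- `e` is an edge of the standard `n`-cycle on `ZMod n`. -/
def IsCycleEdge (n : ℕ) (e : Sym2 (ZMod n)) : Prop :=
  ∃ i : ZMod n, e = s(i, i + 1)

/-- A chord: an unordered pair of distinct vertices of `ZMod n` that is not an
edge of the standard `n`-cycle. -/
def IsChord (n : ℕ) (e : Sym2 (ZMod n)) : Prop :=
  ¬ e.IsDiag ∧ ¬ IsCycleEdge n e

/-- Two chords cross if exactly one endpoint of the second lies strictly between
the endpoints of the first (traversing in the direction of increasing residues). -/
def Cross (n : ℕ) (e f : Sym2 (ZMod n)) : Prop :=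
  ∀ a b c d : ZMod n, e = s(a, b) → f = s(c, d) →
    Xor' (Between n a b c) (Between n a b d)

/-- `S` is a set of pairwise non-crossing chords of the standard `n`-cycle. -/
def NonCrossingChords (n : ℕ) (S : Set (Sym2 (ZMod n))) : Prop :=
  (∀ e ∈ S, IsChord n e) ∧ ∀ e ∈ S, ∀ f ∈ S, e ≠ f → ¬ Cross n e f

/-- The chord graph of a set `S` of chords: the simple graph on `ZMod n`
whose edge set is `S`. -/
def chordGraph (n : ℕ) (S : Set (Sym2 (ZMod n))) : SimpleGraph (ZMod n) :=
  SimpleGraph.fromEdgeSet S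

/-- A vertex is chord-free for `S` if it is incident to no chord of `S`. -/
def ChordFree (n : ℕ) (S : Set (Sym2 (ZMod n))) (v : ZMod n) : Prop :=
  ∀ e ∈ S, v ∉ e

/-- An outerplane graph on `n` vertices: a simple graph on `ZMod n` whose edge
set is the (disjoint) union of the standard `n`-cycle and a set of pairwise
non-crossing chords. -/
def IsOuterplane (n : ℕ) (G : SimpleGraph (ZMod n)) : Prop :=
  ∃ S : Set (Sym2 (ZMod n)), NonCrossingChords n S ∧
    G.edgeSet = {e | IsCycleEdge n e} ∪ S

/-- The multiset of vertex degrees of a graph on a finite vertex type. -/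
noncomputable def degMultiset {V : Type*} [Fintype V] (G : SimpleGraph V) : Multiset ℕ := by
  classical exact Finset.univ.val.map fun v => G.degree v

/-- The multiset of vertex degrees of a graph on `ZMod n` (junk value for `n = 0`). -/
noncomputable def degreeMultiset (n : ℕ) (G : SimpleGraph (ZMod n)) : Multiset ℕ :=
  if h : n = 0 then 0
  else by haveI : NeZero n := ⟨h⟩; exact degMultiset G

/-- `M` is outerplane-unigraphic on `n` vertices: there is an outerplane graph on
`n` vertices with degree multiset `M`, and any two such are isomorphic. -/
def OuterplaneUnigraphic (n : ℕ) (M : Multiset ℕ) : Prop :=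
  (∃ G : SimpleGraph (ZMod n), IsOuterplane n G ∧ degreeMultiset n G = M) ∧
  ∀ G G' : SimpleGraph (ZMod n), IsOuterplane n G → IsOuterplane n G' →
    degreeMultiset n G = M → degreeMultiset n G' = M → Nonempty (G ≃g G')

/-- A caterpillar: a connected acyclic graph (tree) in which all vertices of
degree at least two lie on a common path. -/
def IsCaterpillar {V : Type*} (G : SimpleGraph V) : Prop :=
  G.Connected ∧ G.IsAcyclic ∧
    ∃ (u w : V) (p : G.Walk u w), p.IsPath ∧
      ∀ v : V, (∃ a b : V, a ≠ b ∧ G.Adj v a ∧ G.Adj v b) → v ∈ p.support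

/-!
Write the graph as the cycle plus a set of non-crossing chords. The cycle contributes `2` to every
degree, so some vertex `v`, the hub, lies on `n - 5` chords and every other vertex on at most one;
summing degrees, there are `n - 4` chords in total. Hence exactly one chord `xy` avoids `v`, and `x`
and `y` are not joined to `v` by chords. Exactly four vertices besides `v` are not joined to `v` by
a chord. Among them are `v + 1`, `v - 1` and, since chords do not cross, every vertex of the arc
from `x` to `y` that avoids `v`. This arc has at least three vertices because `xy` is a chord, so
up to reflection the four are `v + 1, v + 2, v + 3, v - 1`, with `{x, y} = {v + 1, v + 3}`.
-/

open Finset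

section Positions

variable {n : ℕ}

lemma val_sub_eq_iff_eq_add_natCast {k : ℕ} (hk : k < n) (v w : ZMod n) :
    (w - v).val = k ↔ w = v + k := by
  have : NeZero n := ⟨by lia⟩
  rw [← ZMod.val_natCast_of_lt hk, (ZMod.val_injective n).eq_iff, ZMod.natCast_zmod_val,
    sub_eq_iff_eq_add']

lemma val_sub_eq_sub_iff_eq_sub_natCast {k : ℕ} (hk : 0 < k) (hkn : k < n) (v w : ZMod n) :
    (w - v).val = n - k ↔ w = v - k := by
  rw [val_sub_eq_iff_eq_add_natCast (by lia), Nat.cast_sub hkn.le, ZMod.natCast_self, zero_sub,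
    ← sub_eq_add_neg]

lemma val_eq_iff_eq_natCast {k : ℕ} (hk : k < n) (w : ZMod n) : w.val = k ↔ w = k := by
  simpa using val_sub_eq_iff_eq_add_natCast hk 0 w

lemma val_eq_sub_one_iff (hn : 1 < n) (w : ZMod n) : w.val = n - 1 ↔ w = -1 := by
  simpa using val_sub_eq_sub_iff_eq_sub_natCast one_pos hn 0 w

variable [NeZero n]

lemma between_swap_iff {a b : ZMod n} (hab : a ≠ b) (w : ZMod n) :
    Between n b a w ↔ (b - a).val < (w - a).val := by
  have hba : (a - b).val = n - (b - a).val := by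
    rw [← neg_sub b a, ZMod.neg_val, if_neg (sub_ne_zero.2 hab.symm)]
  have hlt := (b - a).val_lt
  have hlt' := (w - a).val_lt
  rw [Between, hba]
  rcases le_or_gt (b - a).val (w - a).val with h | h
  · rw [← sub_sub_sub_cancel_right w b a, ZMod.val_sub h]
    lia
  · have hbw : b - w ≠ 0 := fun h0 => h.ne (by rw [sub_eq_zero.1 h0])
    rw [← neg_sub b w, ZMod.neg_val, if_neg hbw, ← sub_sub_sub_cancel_right b w a,
      ZMod.val_sub h.le]
    lia

lemma cross_mk_iff {a b : ZMod n} (hab : a ≠ b) (c d : ZMod n) :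
    Cross n s(a, b) s(c, d) ↔
      (0 < (c - a).val ∧ (c - a).val < (b - a).val ∧ (b - a).val < (d - a).val) ∨
      (0 < (d - a).val ∧ (d - a).val < (b - a).val ∧ (b - a).val < (c - a).val) := by
  have unordered : Cross n s(a, b) s(c, d) ↔
      Xor (Between n a b c) (Between n a b d) ∧ Xor (Between n b a c) (Between n b a d) := by
    refine ⟨fun h => ⟨h a b c d rfl rfl, h b a c d Sym2.eq_swap rfl⟩, fun ⟨h, h'⟩ => ?_⟩
    intro a' b' c' d' hab' hcd'
    rcases Sym2.eq_iff.1 hab' with ⟨rfl, rfl⟩ | ⟨rfl, rfl⟩ <;>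
      rcases Sym2.eq_iff.1 hcd' with ⟨rfl, rfl⟩ | ⟨rfl, rfl⟩ <;>
      first | assumption | exact Or.symm ‹_›
  rw [unordered, between_swap_iff hab, between_swap_iff hab, Between, Between, Xor, Xor]
  lia

lemma val_sub_injective (v : ZMod n) : Function.Injective fun w : ZMod n => (w - v).val :=
  (ZMod.val_injective n).comp sub_left_injective

end Positions

section CycleWithChords

variable {n : ℕ} {S : Set (Sym2 (ZMod n))}

/-- The `n`-cycle together with the pairs in `S`. The outerplane graphs are those for which `S` is a
set of pairwise non-crossing chords. -/
def cycleWithChords (n : ℕ) (S : Set (Sym2 (ZMod n))) : SimpleGraph (ZMod n) :=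
  SimpleGraph.fromEdgeSet ({e | IsCycleEdge n e} ∪ S)

lemma isCycleEdge_mk_iff (a b : ZMod n) : IsCycleEdge n s(a, b) ↔ b = a + 1 ∨ a = b + 1 := by
  constructor
  · rintro ⟨i, hi⟩
    rcases Sym2.eq_iff.1 hi with ⟨rfl, rfl⟩ | ⟨rfl, rfl⟩ <;> simp
  · rintro (rfl | rfl)
    exacts [⟨a, rfl⟩, ⟨b, Sym2.eq_swap⟩]

lemma not_isDiag_of_isCycleEdge (hn : n ≠ 1) {e : Sym2 (ZMod n)} (he : IsCycleEdge n e) :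
    ¬ e.IsDiag := by
  obtain ⟨i, rfl⟩ := he
  have : (1 : ZMod n) ≠ 0 := by rwa [Ne, ZMod.one_eq_zero_iff]
  simpa using this

lemma isChord_mk_iff [NeZero n] (hn : 2 ≤ n) (a b : ZMod n) :
    IsChord n s(a, b) ↔ 2 ≤ (b - a).val ∧ (b - a).val + 2 ≤ n := by
  have hsucc := val_sub_eq_iff_eq_add_natCast hn a b
  have hpred := val_sub_eq_sub_iff_eq_sub_natCast one_pos hn a b
  rw [Nat.cast_one] at hsucc hpred
  rw [IsChord, Sym2.mk_isDiag_iff, isCycleEdge_mk_iff, ← hsucc, ← sub_eq_iff_eq_add,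
    eq_comm (a := a - 1), ← hpred, eq_comm (a := a), ← sub_eq_zero, ← ZMod.val_eq_zero]
  have := (b - a).val_lt
  lia

lemma isOuterplane_iff (hn : n ≠ 1) {G : SimpleGraph (ZMod n)} :
    IsOuterplane n G ↔ ∃ S, NonCrossingChords n S ∧ G = cycleWithChords n S := by
  refine exists_congr fun S => and_congr_right fun hS => ?_
  have hdisj : Disjoint ({e | IsCycleEdge n e} ∪ S) Sym2.diagSet := by
    rw [Set.disjoint_left]
    rintro e (he | he)
    exacts [not_isDiag_of_isCycleEdge hn he, (hS.1 e he).1]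
  rw [SimpleGraph.edgeSet_eq_iff, and_iff_left hdisj, cycleWithChords]

lemma chordGraph_adj_iff (hS : ∀ e ∈ S, IsChord n e) (a b : ZMod n) :
    (chordGraph n S).Adj a b ↔ s(a, b) ∈ S := by
  rw [chordGraph, SimpleGraph.fromEdgeSet_adj, and_iff_left_iff_imp]
  exact fun h => mt Sym2.mk_isDiag_iff.2 (hS _ h).1

lemma chordGraph_edgeSet (hS : ∀ e ∈ S, IsChord n e) : (chordGraph n S).edgeSet = S :=
  Set.ext <| Sym2.ind <| chordGraph_adj_iff hS

lemma not_chordGraph_adj_of_isCycleEdge (hS : ∀ e ∈ S, IsChord n e) {a b : ZMod n}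
    (hab : IsCycleEdge n s(a, b)) : ¬ (chordGraph n S).Adj a b :=
  fun h => (hS _ ((chordGraph_adj_iff hS a b).1 h)).2 hab

lemma chordGraph_compl_adj_of_isCycleEdge (hn : n ≠ 1) (hS : ∀ e ∈ S, IsChord n e) {a b : ZMod n}
    (hab : IsCycleEdge n s(a, b)) : (chordGraph n S)ᶜ.Adj a b :=
  ⟨mt Sym2.mk_isDiag_iff.2 (not_isDiag_of_isCycleEdge hn hab),
    not_chordGraph_adj_of_isCycleEdge hS hab⟩

lemma cycleWithChords_adj_iff (hn : n ≠ 1) (S : Set (Sym2 (ZMod n))) (a b : ZMod n) :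
    (cycleWithChords n S).Adj a b ↔ b = a + 1 ∨ b = a - 1 ∨ (chordGraph n S).Adj a b := by
  have hne : b = a + 1 ∨ a = b + 1 → a ≠ b := fun h =>
    mt Sym2.mk_isDiag_iff.2 (not_isDiag_of_isCycleEdge hn ((isCycleEdge_mk_iff a b).2 h))
  rw [cycleWithChords, chordGraph, SimpleGraph.fromEdgeSet_adj, SimpleGraph.fromEdgeSet_adj,
    Set.mem_union, Set.mem_ofPred_eq, isCycleEdge_mk_iff, eq_sub_iff_add_eq, eq_comm (a := b + 1)]
  tauto

open scoped Classical in
lemma cycleWithChords_degree [NeZero n] (hn : 3 ≤ n) (hS : ∀ e ∈ S, IsChord n e) (v : ZMod n) :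
    (cycleWithChords n S).degree v = (chordGraph n S).degree v + 2 := by
  have hne : v + 1 ≠ v - 1 := by
    rw [Ne, ← sub_eq_zero, add_sub_sub_cancel, one_add_one_eq_two]
    exact_mod_cast (ZMod.natCast_eq_zero_iff 2 n).not.2 (Nat.not_dvd_of_pos_of_lt two_pos hn)
  have hnbr : (cycleWithChords n S).neighborFinset v =
      insert (v + 1) (insert (v - 1) ((chordGraph n S).neighborFinset v)) := by
    ext w
    simp [cycleWithChords_adj_iff (show n ≠ 1 by lia)]
  have hpred : ¬ (chordGraph n S).Adj v (v - 1) :=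
    not_chordGraph_adj_of_isCycleEdge hS (by simp [isCycleEdge_mk_iff])
  have hsucc : ¬ (chordGraph n S).Adj v (v + 1) :=
    not_chordGraph_adj_of_isCycleEdge hS (by simp [isCycleEdge_mk_iff])
  rw [← SimpleGraph.card_neighborFinset_eq_degree, hnbr, card_insert_of_notMem,
    card_insert_of_notMem, SimpleGraph.card_neighborFinset_eq_degree]
  · simpa using hpred
  · simpa [hne] using hsucc

lemma isCycleEdge_map_add_iff (v : ZMod n) (e : Sym2 (ZMod n)) :
    IsCycleEdge n (e.map (v + ·)) ↔ IsCycleEdge n e := by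
  induction e using Sym2.ind with | h a b => ?_
  rw [Sym2.map_mk, isCycleEdge_mk_iff, isCycleEdge_mk_iff, add_assoc, add_assoc, add_right_inj,
    add_right_inj]

lemma isCycleEdge_map_sub_iff (v : ZMod n) (e : Sym2 (ZMod n)) :
    IsCycleEdge n (e.map (v - ·)) ↔ IsCycleEdge n e := by
  induction e using Sym2.ind with | h a b => ?_
  rw [Sym2.map_mk, isCycleEdge_mk_iff, isCycleEdge_mk_iff, sub_eq_iff_eq_add, sub_eq_iff_eq_add]
  grind

lemma nonempty_iso_cycleWithChords_image (S : Set (Sym2 (ZMod n))) (σ : ZMod n ≃ ZMod n)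
    (hσ : ∀ e, IsCycleEdge n (e.map σ) ↔ IsCycleEdge n e) :
    Nonempty (cycleWithChords n S ≃g cycleWithChords n (Sym2.map σ '' S)) := by
  refine ⟨σ, fun {a b} => ?_⟩
  rw [cycleWithChords, cycleWithChords, SimpleGraph.fromEdgeSet_adj, SimpleGraph.fromEdgeSet_adj,
    σ.injective.ne_iff, ← Sym2.map_mk, Set.mem_union, Set.mem_union, Set.mem_ofPred_eq,
    Set.mem_ofPred_eq, hσ, (Sym2.map.injective σ.injective).mem_set_image]

end CycleWithChords

section DegreeMultiset

variable {V : Type*} [Fintype V] {G : SimpleGraph V} [DecidableRel G.Adj]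

lemma degreeMultiset_eq_degMultiset {n : ℕ} [NeZero n] (G : SimpleGraph (ZMod n)) :
    degreeMultiset n G = degMultiset G :=
  dif_neg (NeZero.ne n)

lemma degMultiset_eq_map_degree : degMultiset G = univ.val.map fun v => G.degree v := by
  unfold degMultiset
  congr!

lemma sum_degMultiset : (degMultiset G).sum = 2 * #G.edgeFinset := by
  classical
  rw [degMultiset_eq_map_degree, ← G.sum_degrees_eq_twice_card_edges]
  rfl

lemma exists_degree_eq_of_degMultiset_eq_cons {a : ℕ} {M : Multiset ℕ}
    (h : degMultiset G = a ::ₘ M) : ∃ v, G.degree v = a ∧ ∀ w ≠ v, G.degree w ∈ M := by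
  classical
  rw [degMultiset_eq_map_degree, ← Multiset.map_eq_cons] at h
  obtain ⟨v, -, hv, rfl⟩ := h
  refine ⟨v, hv, fun w hw => Multiset.mem_map_of_mem _ ?_⟩
  exact (Multiset.mem_erase_of_ne hw).2 (mem_univ w)

lemma degMultiset_eq_cons_replicate_add_replicate [DecidableEq V] {v : V} {B : Finset V}
    {a b c : ℕ} (hv : v ∉ B) (ha : G.degree v = a) (hb : ∀ w ∈ B, G.degree w = b)
    (hc : ∀ w ∉ insert v B, G.degree w = c) :
    degMultiset G =
      a ::ₘ (Multiset.replicate (Fintype.card V - (#B + 1)) c + Multiset.replicate #B b) := by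
  have huniv : (univ : Finset V).val = v ::ₘ ((insert v B)ᶜ.val + B.val) := by
    rw [← union_compl (insert v B), ← disjUnion_eq_union _ _ disjoint_compl_right, disjUnion_val,
      insert_val_of_notMem hv, Multiset.cons_add, add_comm]
  rw [degMultiset_eq_map_degree, huniv, Multiset.map_cons, Multiset.map_add, ha,
    Multiset.map_congr rfl fun w hw => hc w (mem_compl.1 hw), Multiset.map_congr rfl hb]
  simp only [Multiset.map_const', card_val, card_compl, card_insert_of_notMem hv]

end DegreeMultiset

section Graph

variable {V : Type*} {G : SimpleGraph V}

lemma incidenceSet_eq_image_neighborSet (G : SimpleGraph V) (v : V) :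
    G.incidenceSet v = (s(v, ·)) '' G.neighborSet v := by
  ext e
  constructor
  · rintro ⟨he, w, rfl⟩
    exact ⟨w, he, rfl⟩
  · rintro ⟨w, hw, rfl⟩
    exact (G.mem_incidenceSet v w).2 hw

lemma eq_of_adj_of_adj_of_degree_le_one {x y z : V} [Fintype (G.neighborSet x)]
    (hx : G.degree x ≤ 1) (hy : G.Adj x y) (hz : G.Adj x z) : y = z :=
  card_le_one.1 hx y (by simpa) z (by simpa)

lemma compl_adj_of_adj_of_degree_le_one {v x y : V} [Fintype (G.neighborSet x)]
    (hx : G.degree x ≤ 1) (hxy : G.Adj x y) (hv : v ∉ s(x, y)) : Gᶜ.Adj v x := by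
  rw [Sym2.mem_iff, not_or] at hv
  exact ⟨hv.1, fun h => hv.2 (eq_of_adj_of_adj_of_degree_le_one hx h.symm hxy)⟩

lemma neighborSet_eq_compl_insert (G : SimpleGraph V) (v : V) :
    G.neighborSet v = (insert v (Gᶜ.neighborSet v))ᶜ := by
  rw [← compl_compl G, SimpleGraph.neighborSet_compl, compl_compl, Set.insert_eq, Set.compl_union,
    Set.sdiff_eq, Set.inter_comm]

lemma exists_edgeSet_eq_insert_incidenceSet [Fintype V] [DecidableRel G.Adj] {v : V}
    (h : #G.edgeFinset = G.degree v + 1) :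
    ∃ x y, v ∉ s(x, y) ∧ G.edgeSet = insert s(x, y) (G.incidenceSet v) := by
  classical
  have hsub : G.incidenceFinset v ⊆ G.edgeFinset := G.incidenceFinset_subset v
  have hcard : #(G.edgeFinset \ G.incidenceFinset v) = 1 := by
    rw [card_sdiff_of_subset hsub, G.card_incidenceFinset_eq_degree, h, Nat.add_sub_cancel_left]
  obtain ⟨e, he⟩ := card_eq_one.1 hcard
  induction e using Sym2.ind with | h x y => ?_
  have hmem : s(x, y) ∈ G.edgeFinset \ G.incidenceFinset v := he ▸ mem_singleton_self _
  rw [mem_sdiff, SimpleGraph.mem_edgeFinset, SimpleGraph.mem_incidenceFinset] at hmem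
  refine ⟨x, y, fun hv => hmem.2 ⟨hmem.1, hv⟩, ?_⟩
  rw [← SimpleGraph.coe_edgeFinset, ← SimpleGraph.coe_incidenceFinset, ← coe_insert, insert_eq,
    ← he, sdiff_union_of_subset hsub]

end Graph

section NeighborPositions

variable {n : ℕ} [NeZero n]

open scoped Classical in
/-- The positions of the neighbours of `v`, counted along the cycle from `v`. -/
noncomputable def neighborPositions (G : SimpleGraph (ZMod n)) (v : ZMod n) : Finset ℕ :=
  (G.neighborFinset v).image fun w => (w - v).val

variable (G : SimpleGraph (ZMod n)) (v : ZMod n)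

open scoped Classical in
lemma card_neighborPositions : #(neighborPositions G v) = G.degree v :=
  card_image_of_injective _ (val_sub_injective v)

lemma val_sub_mem_neighborPositions_iff (w : ZMod n) :
    (w - v).val ∈ neighborPositions G v ↔ G.Adj v w := by
  rw [neighborPositions, (val_sub_injective v).mem_finset_image, SimpleGraph.mem_neighborFinset]

lemma mem_neighborPositions_iff {i : ℕ} (hi : i < n) :
    i ∈ neighborPositions G v ↔ G.Adj v (v + i) := by
  rw [← val_sub_mem_neighborPositions_iff, (val_sub_eq_iff_eq_add_natCast hi v _).2 rfl]

lemma neighborPositions_subset_Icc : neighborPositions G v ⊆ Icc 1 (n - 1) := by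
  refine image_subset_iff.2 fun w hw => mem_Icc.2 ⟨?_, Nat.le_sub_one_of_lt (ZMod.val_lt _)⟩
  rw [SimpleGraph.mem_neighborFinset] at hw
  exact ZMod.val_pos.2 (sub_ne_zero.2 hw.ne')

variable {S : Set (Sym2 (ZMod n))}

lemma mk_notMem_of_lt_of_lt (hS : NonCrossingChords n S) {v w x y : ZMod n} (hxy : s(x, y) ∈ S)
    (hx : 0 < (x - v).val) (hxw : (x - v).val < (w - v).val) (hwy : (w - v).val < (y - v).val) :
    s(v, w) ∉ S := by
  intro hvw
  have hvw' : v ≠ w := mt Sym2.mk_isDiag_iff.2 (hS.1 _ hvw).1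
  refine hS.2 _ hvw _ hxy ?_ ((cross_mk_iff hvw' x y).2 (Or.inl ⟨hx, hxw, hwy⟩))
  intro h
  rcases Sym2.eq_iff.1 h with ⟨rfl, -⟩ | ⟨rfl, -⟩
  · simp at hx
  · simp at hwy

lemma val_sub_add_two_le_of_isChord (hn : 2 ≤ n) {v x y : ZMod n} (hxy : IsChord n s(x, y))
    (h : (x - v).val < (y - v).val) : (x - v).val + 2 ≤ (y - v).val := by
  rw [isChord_mk_iff hn, ← sub_sub_sub_cancel_right y x v, ZMod.val_sub h.le] at hxy
  lia

lemma Icc_subset_neighborPositions_compl (hS : NonCrossingChords n S) {v x y : ZMod n}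
    (hxy : s(x, y) ∈ S) (hvx : (chordGraph n S)ᶜ.Adj v x) (hvy : (chordGraph n S)ᶜ.Adj v y) :
    Icc (x - v).val (y - v).val ⊆ neighborPositions (chordGraph n S)ᶜ v := by
  intro i hi
  obtain ⟨hxi, hiy⟩ := mem_Icc.1 hi
  obtain ⟨w, rfl⟩ : ∃ w, (w - v).val = i :=
    ⟨v + i, (val_sub_eq_iff_eq_add_natCast (hiy.trans_lt (ZMod.val_lt _)) v _).2 rfl⟩
  rw [val_sub_mem_neighborPositions_iff]
  rcases hxi.eq_or_lt with heq | hlt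
  · rwa [← val_sub_injective v heq]
  rcases hiy.eq_or_lt with heq' | hlt'
  · rwa [val_sub_injective v heq']
  have hpos : 0 < (x - v).val := ZMod.val_pos.2 (sub_ne_zero.2 hvx.ne')
  rw [SimpleGraph.compl_adj, chordGraph_adj_iff hS.1]
  refine ⟨?_, mk_notMem_of_lt_of_lt hS hxy hpos hlt hlt'⟩
  rintro rfl
  simp at hlt

lemma one_mem_neighborPositions_compl (hn : 2 ≤ n) (hS : ∀ e ∈ S, IsChord n e) (v : ZMod n) :
    1 ∈ neighborPositions (chordGraph n S)ᶜ v := by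
  rw [mem_neighborPositions_iff _ _ hn, Nat.cast_one]
  exact chordGraph_compl_adj_of_isCycleEdge (by lia) hS ⟨v, rfl⟩

lemma sub_one_mem_neighborPositions_compl (hn : 2 ≤ n) (hS : ∀ e ∈ S, IsChord n e)
    (v : ZMod n) : n - 1 ∈ neighborPositions (chordGraph n S)ᶜ v := by
  rw [← (val_sub_eq_sub_iff_eq_sub_natCast one_pos hn v (v - 1)).2 (by rw [Nat.cast_one]),
    val_sub_mem_neighborPositions_iff]
  exact chordGraph_compl_adj_of_isCycleEdge (by lia) hS
    ⟨v - 1, by rw [sub_add_cancel, Sym2.eq_swap]⟩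

end NeighborPositions

lemma eq_of_Icc_subset_of_card_eq_four {A : Finset ℕ} {m x y : ℕ} (hm : 5 ≤ m) (hA : #A = 4)
    (hAm : A ⊆ Icc 1 m) (hone : 1 ∈ A) (hmax : m ∈ A) (hxy : x + 2 ≤ y) (hIcc : Icc x y ⊆ A) :
    (x = 1 ∧ y = 3 ∧ A = {1, 2, 3, m}) ∨ (x = m - 2 ∧ y = m ∧ A = {m, m - 1, m - 2, 1}) := by
  have hmem {i : ℕ} (hxi : x ≤ i) (hiy : i ≤ y) : i ∈ A := hIcc (mem_Icc.2 ⟨hxi, hiy⟩)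
  obtain ⟨hx, -⟩ := mem_Icc.1 (hAm (hmem le_rfl (by lia)))
  obtain ⟨-, hy⟩ := mem_Icc.1 (hAm (hmem (by lia) le_rfl))
  have hcard (B : Finset ℕ) (hB : B ⊆ A) : #B ≤ 4 := hA ▸ card_le_card hB
  have hlen : y ≤ x + 3 := by
    have := hcard _ hIcc
    rw [Nat.card_Icc] at this
    lia
  have hends : x = 1 ∨ y = m := by
    by_contra! h
    have := hcard _ (insert_subset hone (insert_subset hmax hIcc))
    rw [card_insert_of_notMem (by rw [mem_insert, mem_Icc]; lia),
      card_insert_of_notMem (by rw [mem_Icc]; lia), Nat.card_Icc] at this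
    lia
  rcases hends with rfl | rfl
  · have := hcard _ (insert_subset hmax hIcc)
    rw [card_insert_of_notMem (by rw [mem_Icc]; lia), Nat.card_Icc] at this
    obtain rfl : y = 3 := by lia
    refine Or.inl ⟨rfl, rfl, (eq_of_subset_of_card_le ?_ ?_).symm⟩ <;> grind
  · have := hcard _ (insert_subset hone hIcc)
    rw [card_insert_of_notMem (by rw [mem_Icc]; lia), Nat.card_Icc] at this
    obtain rfl : x = y - 2 := by lia
    refine Or.inr ⟨rfl, rfl, (eq_of_subset_of_card_le ?_ ?_).symm⟩ <;> grind

section TypeA2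

/-- The degree multiset of type A2: one hub of degree `n - 3`, two vertices of degree two, and all
other vertices of degree three. -/
def typeA2Degrees (n : ℕ) : Multiset ℕ :=
  (n - 3) ::ₘ (Multiset.replicate (n - 3) 3 + Multiset.replicate 2 2)

/-- The vertices joined by a chord to the hub `0` in the standard configuration `typeA2Chords`. -/
def typeA2HubNeighbors (n : ℕ) : Set (ZMod n) :=
  {0, 1, 2, 3, -1}ᶜ

/-- The standard chord configuration of type A2: hub `0` and a single chord avoiding it. Every
non-crossing set of chords realising `typeA2Degrees` is a rotation or reflection of this one. -/
def typeA2Chords (n : ℕ) : Set (Sym2 (ZMod n)) :=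
  insert s(1, 3) ((s(0, ·)) '' typeA2HubNeighbors n)

variable {n : ℕ}

lemma val_three_sub_one (hn : 3 ≤ n) : (3 - 1 : ZMod n).val = 2 :=
  (val_sub_eq_iff_eq_add_natCast (by lia) 1 3).2 (by norm_num)

lemma image_map_typeA2Chords (σ : ZMod n ≃ ZMod n) :
    Sym2.map σ '' typeA2Chords n =
      insert s(σ 1, σ 3) ((s(σ 0, ·)) '' {σ 0, σ 1, σ 2, σ 3, σ (-1)}ᶜ) := by
  have hcompl : σ '' {0, 1, 2, 3, -1}ᶜ = {σ 0, σ 1, σ 2, σ 3, σ (-1)}ᶜ := by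
    simp only [Set.image_compl_eq σ.bijective, Set.image_insert_eq, Set.image_singleton]
  rw [typeA2Chords, typeA2HubNeighbors, Set.image_insert_eq, Sym2.map_mk, ← hcompl,
    Set.image_image, Set.image_image]
  simp only [Sym2.map_mk]

variable [NeZero n]

lemma mem_typeA2HubNeighbors_iff (hn : 5 ≤ n) (j : ZMod n) :
    j ∈ typeA2HubNeighbors n ↔ j.val ∈ Icc 4 (n - 2) := by
  have hzero := val_eq_iff_eq_natCast (show 0 < n by lia) j
  have hone := val_eq_iff_eq_natCast (show 1 < n by lia) j
  have htwo := val_eq_iff_eq_natCast (show 2 < n by lia) j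
  have hthree := val_eq_iff_eq_natCast (show 3 < n by lia) j
  have hneg := val_eq_sub_one_iff (show 1 < n by lia) j
  push_cast at hzero hone htwo hthree
  simp only [typeA2HubNeighbors, Set.mem_compl_iff, Set.mem_insert_iff, Set.mem_singleton_iff,
    ← hzero, ← hone, ← htwo, ← hthree, ← hneg, mem_Icc]
  have := j.val_lt
  lia

lemma isChord_of_mem_typeA2Chords (hn : 5 ≤ n) : ∀ e ∈ typeA2Chords n, IsChord n e := by
  rintro _ (rfl | ⟨j, hj, rfl⟩)
  · rw [isChord_mk_iff (by lia), val_three_sub_one (by lia)]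
    lia
  · rw [mem_typeA2HubNeighbors_iff hn, mem_Icc] at hj
    rw [isChord_mk_iff (by lia), sub_zero]
    lia

lemma nonCrossingChords_typeA2Chords (hn : 5 ≤ n) : NonCrossingChords n (typeA2Chords n) := by
  have hchord := isChord_of_mem_typeA2Chords hn
  refine ⟨hchord, ?_⟩
  have hval {j : ZMod n} (hj : j ∈ typeA2HubNeighbors n) : 4 ≤ j.val :=
    (mem_Icc.1 ((mem_typeA2HubNeighbors_iff hn j).1 hj)).1
  have hne_zero {j : ZMod n} (hj : j ∈ typeA2HubNeighbors n) : 0 ≠ j :=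
    fun h => hj (Or.inl h.symm)
  have hval_one : (1 : ZMod n).val = 1 := ZMod.val_one'' (by lia)
  rintro _ (rfl | ⟨j, hj, rfl⟩) _ (rfl | ⟨k, hk, rfl⟩) hne
  · exact absurd rfl hne
  · have hval_zero_sub : (0 - 1 : ZMod n).val = n - 1 :=
      (val_sub_eq_sub_iff_eq_sub_natCast one_pos (by lia) 1 0).2 (by simp)
    have hval_sub : (k - 1).val = k.val - 1 := by
      rw [ZMod.val_sub (by have := hval hk; lia), hval_one]
    have hk4 := hval hk
    have hone_ne : (1 : ZMod n) ≠ 3 := mt Sym2.mk_isDiag_iff.2 (hchord _ (Or.inl rfl)).1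
    rw [cross_mk_iff hone_ne, val_three_sub_one (by lia), hval_zero_sub, hval_sub]
    lia
  · have hval_three : (3 : ZMod n).val = 3 := ZMod.val_ofNat_of_lt (by lia)
    have hj4 := hval hj
    rw [cross_mk_iff (hne_zero hj), sub_zero, sub_zero, sub_zero, hval_one, hval_three]
    lia
  · simp [cross_mk_iff (hne_zero hj)]

lemma chordGraph_typeA2Chords_adj_iff (hn : 5 ≤ n) (a b : ZMod n) :
    (chordGraph n (typeA2Chords n)).Adj a b ↔
      (a.val = 1 ∧ b.val = 3 ∨ a.val = 3 ∧ b.val = 1) ∨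
      a.val = 0 ∧ b.val ∈ Icc 4 (n - 2) ∨ b.val = 0 ∧ a.val ∈ Icc 4 (n - 2) := by
  have hone (w : ZMod n) := val_eq_iff_eq_natCast (show 1 < n by lia) w
  have hthree (w : ZMod n) := val_eq_iff_eq_natCast (show 3 < n by lia) w
  push_cast at hone hthree
  rw [chordGraph_adj_iff (isChord_of_mem_typeA2Chords hn), typeA2Chords, Set.mem_insert_iff,
    Sym2.eq_iff, hone, hone, hthree, hthree]
  refine or_congr_right ?_
  simp only [ZMod.val_eq_zero, ← mem_typeA2HubNeighbors_iff hn]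
  constructor
  · rintro ⟨j, hj, h⟩
    rcases Sym2.eq_iff.1 h with ⟨rfl, rfl⟩ | ⟨rfl, rfl⟩
    exacts [Or.inl ⟨rfl, hj⟩, Or.inr ⟨rfl, hj⟩]
  · rintro (⟨rfl, hb⟩ | ⟨rfl, ha⟩)
    exacts [⟨b, hb, rfl⟩, ⟨a, ha, Sym2.eq_swap⟩]

open scoped Classical in
lemma chordGraph_typeA2Chords_degree_zero (hn : 5 ≤ n) :
    (chordGraph n (typeA2Chords n)).degree 0 = n - 5 := by
  have hpos : neighborPositions (chordGraph n (typeA2Chords n)) 0 = Icc 4 (n - 2) := by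
    ext i
    rcases lt_or_ge i n with hi | hi
    · rw [mem_neighborPositions_iff _ _ hi, chordGraph_typeA2Chords_adj_iff hn, zero_add,
        ZMod.val_natCast_of_lt hi, ZMod.val_zero, mem_Icc, mem_Icc]
      lia
    · refine iff_of_false (fun h => ?_) (by rw [mem_Icc]; lia)
      have := mem_Icc.1 (neighborPositions_subset_Icc _ _ h)
      lia
  rw [← card_neighborPositions, hpos, Nat.card_Icc]
  lia

open scoped Classical in
lemma chordGraph_typeA2Chords_degree_eq_zero (hn : 5 ≤ n) {w : ZMod n}
    (hw : w.val = 2 ∨ w.val = n - 1) :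
    (chordGraph n (typeA2Chords n)).degree w = 0 := by
  rw [SimpleGraph.degree_eq_zero_iff_notMem_support, SimpleGraph.mem_support]
  rintro ⟨b, hb⟩
  rw [chordGraph_typeA2Chords_adj_iff hn, mem_Icc, mem_Icc] at hb
  lia

open scoped Classical in
lemma chordGraph_typeA2Chords_degree_eq_one (hn : 5 ≤ n) {w : ZMod n} (hzero : w.val ≠ 0)
    (htwo : w.val ≠ 2) (hlast : w.val ≠ n - 1) : (chordGraph n (typeA2Chords n)).degree w = 1 := by
  obtain ⟨k, hk, hadj⟩ :
      ∃ k < n, ∀ b, (chordGraph n (typeA2Chords n)).Adj w b ↔ b.val = k := by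
    have hlt := w.val_lt
    refine ⟨if w.val = 1 then 3 else if w.val = 3 then 1 else 0, by split_ifs <;> lia,
      fun b => ?_⟩
    rw [chordGraph_typeA2Chords_adj_iff hn, mem_Icc, mem_Icc]
    split_ifs <;> lia
  rw [SimpleGraph.degree_eq_one_iff_existsUnique_adj]
  refine ⟨k, (hadj _).2 (ZMod.val_natCast_of_lt hk), fun b hb => ?_⟩
  exact (val_eq_iff_eq_natCast hk b).1 ((hadj b).1 hb)

lemma degMultiset_typeA2 (hn : 5 ≤ n) :
    degMultiset (cycleWithChords n (typeA2Chords n)) = typeA2Degrees n := by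
  classical
  have hdegree := cycleWithChords_degree (by lia) (isChord_of_mem_typeA2Chords hn)
  have htwo (w : ZMod n) : w.val = 2 ↔ w = 2 := val_eq_iff_eq_natCast (by lia) w
  have hneg (w : ZMod n) : w.val = n - 1 ↔ w = -1 := val_eq_sub_one_iff (by lia) w
  have hcard : #({2, -1} : Finset (ZMod n)) = 2 := by
    refine card_pair fun h => ?_
    have := (htwo 2).2 rfl
    have := (hneg 2).2 h
    lia
  have hB : (0 : ZMod n) ∉ ({2, -1} : Finset (ZMod n)) := by
    rw [mem_insert, mem_singleton, ← htwo, ← hneg, ZMod.val_zero]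
    lia
  have := degMultiset_eq_cons_replicate_add_replicate (G := cycleWithChords n (typeA2Chords n))
    (a := n - 3) (b := 2) (c := 3) hB ?_ ?_ ?_
  · rwa [hcard, ZMod.card] at this
  · rw [hdegree, chordGraph_typeA2Chords_degree_zero hn]
    lia
  · intro w hw
    rw [mem_insert, mem_singleton, ← htwo, ← hneg] at hw
    rw [hdegree, chordGraph_typeA2Chords_degree_eq_zero hn hw]
  · intro w hw
    rw [mem_insert, mem_insert, mem_singleton, ← htwo, ← hneg, ← ZMod.val_eq_zero, not_or,
      not_or] at hw
    rw [hdegree, chordGraph_typeA2Chords_degree_eq_one hn hw.1 hw.2.1 hw.2.2]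

variable {S : Set (Sym2 (ZMod n))}

open scoped Classical in
lemma exists_hub (hn : 5 ≤ n) (hS : ∀ e ∈ S, IsChord n e)
    (hdeg : degMultiset (cycleWithChords n S) = typeA2Degrees n) :
    ∃ v, (chordGraph n S).degree v + 5 = n ∧ (∀ w ≠ v, (chordGraph n S).degree w ≤ 1) ∧
      #(chordGraph n S).edgeFinset = (chordGraph n S).degree v + 1 := by
  have hchord := cycleWithChords_degree (by lia) hS
  obtain ⟨v, hv, hne⟩ := exists_degree_eq_of_degMultiset_eq_cons hdeg
  rw [hchord] at hv
  refine ⟨v, by lia, fun w hw => ?_, ?_⟩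
  · have := hne w hw
    rw [hchord, Multiset.mem_add, Multiset.mem_replicate, Multiset.mem_replicate] at this
    lia
  · have hsum : ∑ w, (cycleWithChords n S).degree w = (n - 3) + ((n - 3) * 3 + 2 * 2) := by
      rw [SimpleGraph.sum_degrees_eq_twice_card_edges, ← sum_degMultiset, hdeg, typeA2Degrees,
        Multiset.sum_cons, Multiset.sum_add, Multiset.sum_replicate, Multiset.sum_replicate,
        smul_eq_mul, smul_eq_mul]
    simp_rw [hchord, sum_add_distrib, SimpleGraph.sum_degrees_eq_twice_card_edges] at hsum
    simp only [sum_const, card_univ, ZMod.card, smul_eq_mul] at hsum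
    lia

open scoped Classical in
lemma extra_chord_eq_and_compl_neighborSet_eq (hn : 6 ≤ n) (hS : NonCrossingChords n S)
    {v x y : ZMod n} (hv : (chordGraph n S).degree v + 5 = n) (hxy : s(x, y) ∈ S)
    (hvx : (chordGraph n S)ᶜ.Adj v x) (hvy : (chordGraph n S)ᶜ.Adj v y)
    (hlt : (x - v).val < (y - v).val) :
    (x = v + 1 ∧ y = v + 3 ∧
      (chordGraph n S)ᶜ.neighborSet v = {v + 1, v + 2, v + 3, v - 1}) ∨
    (x = v - 3 ∧ y = v - 1 ∧
      (chordGraph n S)ᶜ.neighborSet v = {v - 1, v - 2, v - 3, v + 1}) := by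
  have hcard : #(neighborPositions (chordGraph n S)ᶜ v) = 4 := by
    rw [card_neighborPositions, SimpleGraph.degree_compl, ZMod.card]
    lia
  have hadd {k : ℕ} (hk : k < n) (w : ZMod n) := val_sub_eq_iff_eq_add_natCast hk v w
  have hsub {k : ℕ} (hk : 0 < k) (hkn : k < n) (w : ZMod n) :=
    val_sub_eq_sub_iff_eq_sub_natCast hk hkn v w
  rcases eq_of_Icc_subset_of_card_eq_four (by lia) hcard (neighborPositions_subset_Icc _ v)
    (one_mem_neighborPositions_compl (by lia) hS.1 v)
    (sub_one_mem_neighborPositions_compl (by lia) hS.1 v)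
    (val_sub_add_two_le_of_isChord (by lia) (hS.1 _ hxy) hlt)
    (Icc_subset_neighborPositions_compl hS hxy hvx hvy) with ⟨hx, hy, hA⟩ | ⟨hx, hy, hA⟩
  · rw [hadd (by lia)] at hx hy
    refine Or.inl ⟨mod_cast hx, mod_cast hy, Set.ext fun w => ?_⟩
    rw [SimpleGraph.mem_neighborSet, ← val_sub_mem_neighborPositions_iff, hA]
    simp [hadd (show 1 < n by lia), hadd (show 2 < n by lia), hadd (show 3 < n by lia),
      hsub one_pos (show 1 < n by lia)]
  · rw [Nat.sub_sub] at hx hA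
    rw [hsub (by lia) (by lia)] at hx hy
    refine Or.inr ⟨mod_cast hx, mod_cast hy, Set.ext fun w => ?_⟩
    rw [SimpleGraph.mem_neighborSet, ← val_sub_mem_neighborPositions_iff, hA, Nat.sub_sub]
    simp [hadd (show 1 < n by lia), hsub two_pos (show 2 < n by lia),
      hsub three_pos (show 3 < n by lia), hsub one_pos (show 1 < n by lia)]

open scoped Classical in
lemma exists_hub_and_extra_chord (hn : 5 ≤ n) (hS : ∀ e ∈ S, IsChord n e)
    (hdeg : degMultiset (cycleWithChords n S) = typeA2Degrees n) :
    ∃ v x y, (chordGraph n S).degree v + 5 = n ∧ (x - v).val < (y - v).val ∧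
      (chordGraph n S)ᶜ.Adj v x ∧ (chordGraph n S)ᶜ.Adj v y ∧
      S = insert s(x, y) ((s(v, ·)) '' (insert v ((chordGraph n S)ᶜ.neighborSet v))ᶜ) := by
  obtain ⟨v, hv, hle, hcard⟩ := exists_hub hn hS hdeg
  obtain ⟨x, y, hvxy, hedges⟩ := exists_edgeSet_eq_insert_incidenceSet hcard
  rw [chordGraph_edgeSet hS, incidenceSet_eq_image_neighborSet, neighborSet_eq_compl_insert]
    at hedges
  have hxy : (chordGraph n S).Adj x y :=
    (chordGraph_adj_iff hS x y).2 (hedges ▸ Set.mem_insert _ _)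
  wlog hlt : (x - v).val < (y - v).val generalizing x y
  · have hne : (x - v).val ≠ (y - v).val := (val_sub_injective v).ne hxy.ne
    rw [Sym2.eq_swap] at hvxy hedges
    exact this y x hvxy hedges hxy.symm (by lia)
  have hne : x ≠ v ∧ y ≠ v := by
    rw [Sym2.mem_iff, not_or] at hvxy
    exact hvxy.imp Ne.symm Ne.symm
  exact ⟨v, x, y, hv, hlt, compl_adj_of_adj_of_degree_le_one (hle x hne.1) hxy hvxy,
    compl_adj_of_adj_of_degree_le_one (hle y hne.2) hxy.symm (Sym2.eq_swap ▸ hvxy), hedges⟩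

lemma eq_image_typeA2Chords (hn : 6 ≤ n) (hS : NonCrossingChords n S)
    (hdeg : degMultiset (cycleWithChords n S) = typeA2Degrees n) :
    ∃ v, S = Sym2.map (Equiv.addLeft v) '' typeA2Chords n ∨
      S = Sym2.map (Equiv.subLeft v) '' typeA2Chords n := by
  obtain ⟨v, x, y, hv, hlt, hvx, hvy, hedges⟩ := exists_hub_and_extra_chord (by lia) hS.1 hdeg
  have hxy : s(x, y) ∈ S := hedges ▸ Set.mem_insert _ _
  refine ⟨v, (extra_chord_eq_and_compl_neighborSet_eq hn hS hv hxy hvx hvy hlt).imp ?_ ?_⟩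
  · rintro ⟨rfl, rfl, hnbr⟩
    rw [hnbr] at hedges
    rw [image_map_typeA2Chords]
    simpa [← sub_eq_add_neg] using hedges
  · rintro ⟨rfl, rfl, hnbr⟩
    rw [hnbr, Sym2.eq_swap] at hedges
    rw [image_map_typeA2Chords]
    simpa using hedges

lemma nonempty_typeA2_iso (hn : 6 ≤ n) (hS : NonCrossingChords n S)
    (hdeg : degMultiset (cycleWithChords n S) = typeA2Degrees n) :
    Nonempty (cycleWithChords n (typeA2Chords n) ≃g cycleWithChords n S) := by
  obtain ⟨v, rfl | rfl⟩ := eq_image_typeA2Chords hn hS hdeg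
  · exact nonempty_iso_cycleWithChords_image _ _ (isCycleEdge_map_add_iff v)
  · exact nonempty_iso_cycleWithChords_image _ _ (isCycleEdge_map_sub_iff v)

end TypeA2

/-- Type A2 of the paper's Theorem 1: for `n ≥ 7`, the multiset
`{n-3, 3^(n-3), 2^2}` is outerplane-unigraphic. -/
theorem unigraphic_A2 (n : ℕ) (hn : 7 ≤ n) :
    OuterplaneUnigraphic n
      ((n - 3) ::ₘ (Multiset.replicate (n - 3) 3 + Multiset.replicate 2 2)) := by
  have : NeZero n := ⟨by lia⟩
  simp only [OuterplaneUnigraphic, isOuterplane_iff (show n ≠ 1 by lia),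
    degreeMultiset_eq_degMultiset]
  refine ⟨⟨_, ⟨_, nonCrossingChords_typeA2Chords (by lia), rfl⟩,
    degMultiset_typeA2 (by lia)⟩, ?_⟩
  rintro _ _ ⟨S, hS, rfl⟩ ⟨T, hT, rfl⟩ hdegS hdegT
  obtain ⟨isoS⟩ := nonempty_typeA2_iso (by lia) hS hdegS
  obtain ⟨isoT⟩ := nonempty_typeA2_iso (by lia) hT hdegT
  exact ⟨isoS.symm.trans isoT⟩
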